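/- Let A, B be 6×6 complex matrices with rank(A : B) = 6 and A C₆ A* = B C₆ B*, where C₆ = ((-1)^r δ_{r,7-s})_{r,s=1}^6. If rank A = 3 + r for some 0 ≤ r ≤ 3, then rank B = 3 + r. -/

import Mathlib

open Matrix

/-- The 6×6 symplectic matrix `C₆ = ((-1)^r δ_{r,7-s})_{r,s=1}^6`, 0-based indices. -/
def C6 : Matrix (Fin 6) (Fin 6) ℂ :=
  Matrix.of fun r s => (-1 : ℂ) ^ ((r : ℕ) + 1) * (if (r : ℕ) + (s : ℕ) = 5 then 1 else 0)

open scoped ComplexOrder in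
theorem rank_conj_aux {m n : Type} [Fintype m] [Fintype n] (M : Matrix m n ℂ) :
    Mᴴ.rank = M.rank := Matrix.rank_conjTranspose M

set_option maxHeartbeats 4000000 in
theorem C6_sq : C6 * (-C6) = 1 := by
  ext i j
  fin_cases i <;> fin_cases j <;> simp [C6, Matrix.mul_apply, Fin.sum_univ_succ] <;> norm_num

theorem C6_det : IsUnit C6.det :=
  Matrix.isUnit_det_of_right_inverse C6_sq

theorem rank_le_aux (A B : Matrix (Fin 6) (Fin 6) ℂ)
    (hinj : ∀ x, Aᴴ *ᵥ x = 0 → Bᴴ *ᵥ x = 0 → x = 0)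
    (hsa : A * C6 * Aᴴ = B * C6 * Bᴴ) : A.rank ≤ B.rank := by
  have hmem : ∀ x ∈ LinearMap.ker (Bᴴ).mulVecLin,
      (Aᴴ).mulVecLin x ∈ LinearMap.ker (A * C6).mulVecLin := by
    intro x hx
    simp only [LinearMap.mem_ker, Matrix.mulVecLin_apply] at hx ⊢
    rw [Matrix.mulVec_mulVec, hsa, ← Matrix.mulVec_mulVec, hx, Matrix.mulVec_zero]
  have hle := LinearMap.finrank_le_finrank_of_injective
    (f := (Aᴴ).mulVecLin.restrict hmem) (by
      rw [← LinearMap.ker_eq_bot, LinearMap.ker_eq_bot']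
      rintro ⟨x, hx⟩ h
      have h' := congrArg Subtype.val h
      simp only [LinearMap.mem_ker, Matrix.mulVecLin_apply] at hx
      exact Subtype.ext (hinj x h' hx))
  have h1 := LinearMap.finrank_range_add_finrank_ker (Bᴴ).mulVecLin
  have h2 := LinearMap.finrank_range_add_finrank_ker (A * C6).mulVecLin
  have h3 : Module.finrank ℂ (LinearMap.range (Bᴴ).mulVecLin) = B.rank :=
    rank_conj_aux B
  have h4 : Module.finrank ℂ (LinearMap.range (A * C6).mulVecLin) = A.rank :=
    Matrix.rank_mul_eq_left_of_isUnit_det C6 A C6_det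
  omega

theorem rank_A_eq_rank_B (A B : Matrix (Fin 6) (Fin 6) ℂ) (r : ℕ)
    (hrank : (Matrix.of fun i => Sum.elim (A i) (B i) :
        Matrix (Fin 6) (Fin 6 ⊕ Fin 6) ℂ).rank = 6)
    (hsa : A * C6 * Aᴴ = B * C6 * Bᴴ)
    (hr : r ≤ 3) (hA : A.rank = 3 + r) :
    B.rank = 3 + r := by
  have hinj : ∀ x, Aᴴ *ᵥ x = 0 → Bᴴ *ᵥ x = 0 → x = 0 := by
    intro x ha hb
    set M := (Matrix.of fun i => Sum.elim (A i) (B i) : Matrix (Fin 6) (Fin 6 ⊕ Fin 6) ℂ) with hM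
    have h1 := LinearMap.finrank_range_add_finrank_ker (Mᴴ).mulVecLin
    have h3 : Module.finrank ℂ (LinearMap.range (Mᴴ).mulVecLin) = 6 :=
      (rank_conj_aux M).trans hrank
    rw [h3, Module.finrank_fin_fun] at h1
    have h0 : LinearMap.ker (Mᴴ).mulVecLin = ⊥ := Submodule.finrank_eq_zero.mp (by omega)
    refine LinearMap.ker_eq_bot'.mp h0 x ?_
    rw [Matrix.mulVecLin_apply]
    funext k
    rcases k with k | k
    · exact congrFun ha k
    · exact congrFun hb k
  have h1 := rank_le_aux A B hinj hsa
  have h2 := rank_le_aux B A (fun x hb ha => hinj x ha hb) hsa.symm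
  omega
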